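/- Let E be a complete real inner product space, f : E → ℝ a differentiable function, and γ : ℝ → E a curve such that for every t ∈ ℝ, HasDerivAt γ (gradient f (γ t)) t. Suppose γ(t) converges to a point p ∈ E as t → +∞. Then for every t₀ with gradient f (γ t₀) ≠ 0 one has f(γ t₀) < f(p). -/

import Mathlib

open Filter Topology

/-!
Along a gradient trajectory `f ∘ γ` has derivative `‖∇f(γ t)‖²`. It is therefore nondecreasing, and
it increases strictly just after a time `t₀` at which the gradient is nonzero. From a slightly later
time on it thus stays above a constant larger than `f (γ t₀)`, and this lower bound passes to `f p`
for any cluster point `p` of the trajectory.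
-/

open Set

theorem le_of_mapClusterPt_of_upperSemicontinuousAt {ι X α : Type*} [TopologicalSpace X]
    [LinearOrder α] {l : Filter ι} {u : ι → X} {f : X → α} {p : X} {c : α}
    (hp : MapClusterPt p l u) (hf : UpperSemicontinuousAt f p) (hc : ∀ᶠ i in l, c ≤ f (u i)) :
    c ≤ f p := by
  by_contra! hlt
  obtain ⟨i, hi_lt, hi_le⟩ :=
    ((mapClusterPt_iff_frequently.mp hp _ (hf c hlt)).and_eventually hc).exists
  exact hi_lt.not_ge hi_le

theorem eventually_nhdsGT_lt_of_hasDerivWithinAt_pos {g : ℝ → ℝ} {g' a : ℝ}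
    (hg : HasDerivWithinAt g g' (Ioi a) a) (hg' : 0 < g') : ∀ᶠ t in 𝓝[>] a, g a < g t := by
  have hslope : ∀ᶠ t in 𝓝[>] a, 0 < slope g a t :=
    ((hasDerivWithinAt_iff_tendsto_slope' self_notMem_Ioi).mp hg).eventually_const_lt hg'
  filter_upwards [hslope, self_mem_nhdsWithin] with t ht hat
  exact (slope_pos_iff_of_le (le_of_lt hat)).mp ht

theorem hasDerivWithinAt_comp_of_hasGradientAt {𝕜 F : Type*} [RCLike 𝕜] [NormedAddCommGroup F]
    [InnerProductSpace 𝕜 F] [CompleteSpace F] {f : F → 𝕜} {f' v : F} {γ : 𝕜 → F} {s : Set 𝕜}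
    {t : 𝕜} (hf : HasGradientAt f f' (γ t)) (hγ : HasDerivWithinAt γ v s t) :
    HasDerivWithinAt (f ∘ γ) (inner 𝕜 f' v) s t :=
  hf.hasFDerivAt.comp_hasDerivWithinAt t hγ

section GradientTrajectory

variable {E : Type*} [NormedAddCommGroup E] [InnerProductSpace ℝ E] [CompleteSpace E]
  {f : E → ℝ} {γ : ℝ → E} {s : Set ℝ}

theorem hasDerivWithinAt_comp_of_isIntegralCurveOn_gradient {t : ℝ}
    (hf : DifferentiableAt ℝ f (γ t)) (hγ : IsIntegralCurveOn γ (fun _ ↦ gradient f) s)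
    (ht : t ∈ s) : HasDerivWithinAt (f ∘ γ) (‖gradient f (γ t)‖ ^ 2) s t := by
  rw [← real_inner_self_eq_norm_sq]
  exact hasDerivWithinAt_comp_of_hasGradientAt hf.hasGradientAt (hγ t ht)

theorem monotoneOn_comp_of_isIntegralCurveOn_gradient (hs : Convex ℝ s)
    (hf : ∀ t ∈ s, DifferentiableAt ℝ f (γ t))
    (hγ : IsIntegralCurveOn γ (fun _ ↦ gradient f) s) : MonotoneOn (f ∘ γ) s := by
  have hderiv : ∀ t ∈ s, HasDerivWithinAt (f ∘ γ) (‖gradient f (γ t)‖ ^ 2) s t :=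
    fun t ht ↦ hasDerivWithinAt_comp_of_isIntegralCurveOn_gradient (hf t ht) hγ ht
  exact monotoneOn_of_hasDerivWithinAt_nonneg hs (fun t ht ↦ (hderiv t ht).continuousWithinAt)
    (fun t ht ↦ (hderiv t (interior_subset ht)).mono interior_subset) (fun _ _ ↦ sq_nonneg _)

theorem eventually_nhdsGT_lt_of_isIntegralCurveOn_gradient {t₀ : ℝ}
    (hf : DifferentiableAt ℝ f (γ t₀))
    (hγ : IsIntegralCurveOn γ (fun _ ↦ gradient f) (Ici t₀)) (h₀ : gradient f (γ t₀) ≠ 0) :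
    ∀ᶠ t in 𝓝[>] t₀, f (γ t₀) < f (γ t) := by
  have hderiv := hasDerivWithinAt_comp_of_isIntegralCurveOn_gradient hf hγ self_mem_Ici
  exact eventually_nhdsGT_lt_of_hasDerivWithinAt_pos hderiv.Ioi_of_Ici
    (pow_pos (norm_pos_iff.mpr h₀) 2)

theorem stmt_3_general {p : E} {t₀ : ℝ} (hf : ∀ t ∈ Ici t₀, DifferentiableAt ℝ f (γ t))
    (hγ : IsIntegralCurveOn γ (fun _ ↦ gradient f) (Ici t₀)) (hp : MapClusterPt p atTop γ)
    (hfp : UpperSemicontinuousAt f p) (h₀ : gradient f (γ t₀) ≠ 0) : f (γ t₀) < f p := by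
  have hmono : MonotoneOn (f ∘ γ) (Ici t₀) :=
    monotoneOn_comp_of_isIntegralCurveOn_gradient (convex_Ici t₀) hf hγ
  obtain ⟨t₁, hlt, ht₁⟩ : ∃ t₁, f (γ t₀) < f (γ t₁) ∧ t₀ < t₁ :=
    ((eventually_nhdsGT_lt_of_isIntegralCurveOn_gradient (hf t₀ self_mem_Ici) hγ h₀).and
      self_mem_nhdsWithin).exists
  have hge : ∀ᶠ t in atTop, f (γ t₁) ≤ f (γ t) :=
    (eventually_ge_atTop t₁).mono fun t ht ↦ hmono ht₁.le (ht₁.le.trans ht) ht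
  exact hlt.trans_le (le_of_mapClusterPt_of_upperSemicontinuousAt hp hfp hge)

end GradientTrajectory

/-- If a gradient trajectory `γ` of a differentiable function `f` on a complete real inner
product space converges to `p` as `t → +∞`, then `f (γ t₀) < f p` at every time `t₀`
where the gradient does not vanish. -/
theorem stmt_3 {E : Type*} [NormedAddCommGroup E] [InnerProductSpace ℝ E] [CompleteSpace E]
    (f : E → ℝ) (hf : Differentiable ℝ f) (γ : ℝ → E)
    (hγ : ∀ t : ℝ, HasDerivAt γ (gradient f (γ t)) t)
    (p : E) (hp : Tendsto γ atTop (𝓝 p)) :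
    ∀ t₀ : ℝ, gradient f (γ t₀) ≠ 0 → f (γ t₀) < f p :=
  fun t₀ ↦ stmt_3_general (fun t _ ↦ hf (γ t)) (IsIntegralCurve.isIntegralCurveOn hγ (Ici t₀))
    hp.mapClusterPt (hf p).continuousAt.upperSemicontinuousAt
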